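/- arXiv:1610.02670 — 6 statements merged into one kernel-verified Lean document; each statement's English description precedes it below -/
import Mathlib

section
/- Let n be a positive integer, u ∈ ℂ^n with ‖u‖ = 1, P_x > 0, and let K = P_x u u† (a rank-one covariance). Let h ∈ ℂ^n, a ∈ ℝ^n with a_t ≥ 0, σ_w² > 0, γ = 1/σ_w², and B = diag(h_t √a_t). Then the MMSE satisfies tr[K − K B†(B K B† + σ_w² I_n)⁻¹ B K] = P_x / (1 + γ P_x Σ_{t=1}^n |h_t|² |u_t|² a_t) = P_x / (1 + γ Σ_{t=1}^n |h_t|² σ²_{x_t} a_t), where σ²_{x_t} = P_x |u_t|² is the variance of the t-th signal component. -/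
open Matrix

/-!
Write `K = u w` for a rank-one source covariance, with `u` a column and `w` a row. The matrix
`B K Bᴴ + N` to be inverted is then a rank-one perturbation of the noise covariance `N`, and its
inverse is only ever applied to the vector `v = B u`. Since that matrix sends `N⁻¹ v` to a
multiple of `v`, say `(1 + q) v`, the error covariance is `K` divided by `1 + q`. For white noise
`q` is the total received signal power divided by the noise variance.
-/

section RankOneUpdate

variable {m R : Type*} [Fintype m] [DecidableEq m]

theorem det_add_vecMulVec [CommRing R] {A : Matrix m m R} (hA : IsUnit A.det) (v w : m → R) :
    (A + vecMulVec v w).det = A.det * (1 + w ⬝ᵥ A⁻¹ *ᵥ v) := by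
  rw [vecMulVec_eq Unit, det_add_replicateCol_mul_replicateRow hA, Matrix.mul_assoc,
    ← replicateCol_mulVec, ← det_one_add_mul_comm, det_one_add_replicateCol_mul_replicateRow]

theorem add_vecMulVec_mulVec_inv_mulVec [CommRing R] {A : Matrix m m R} (hA : IsUnit A.det)
    (v w : m → R) :
    (A + vecMulVec v w) *ᵥ (A⁻¹ *ᵥ v) = (1 + w ⬝ᵥ A⁻¹ *ᵥ v) • v := by
  rw [add_mulVec, mulVec_mulVec, mul_nonsing_inv _ hA, one_mulVec, vecMulVec_mulVec,
    op_smul_eq_smul, add_smul, one_smul]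

theorem inv_add_vecMulVec_mulVec [Field R] {A : Matrix m m R} (hA : IsUnit A.det)
    {v w : m → R} (hd : 1 + w ⬝ᵥ A⁻¹ *ᵥ v ≠ 0) :
    (A + vecMulVec v w)⁻¹ *ᵥ v = (1 + w ⬝ᵥ A⁻¹ *ᵥ v)⁻¹ • A⁻¹ *ᵥ v := by
  have hdet : IsUnit (A + vecMulVec v w).det := by
    rw [det_add_vecMulVec hA]
    exact hA.mul hd.isUnit
  rw [eq_inv_smul_iff₀ hd, ← mulVec_smul, ← add_vecMulVec_mulVec_inv_mulVec hA, mulVec_mulVec,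
    nonsing_inv_mul _ hdet, one_mulVec]

end RankOneUpdate

section ErrorCovariance

variable {m n R : Type*} [Fintype m] [DecidableEq m] [Fintype n]

/-- The error covariance `K_x - K_{xy} K_y⁻¹ K_{xy}†` of the linear MMSE estimator of `x` from
`y = B x + w`, where `x` has covariance `K` and the uncorrelated noise `w` has covariance `N`.
The inverse is the matrix `⁻¹`, so this is meaningful only if `B K Bᴴ + N` is invertible. -/
noncomputable def mmseErrorCov [CommRing R] [Star R] (K : Matrix n n R) (B : Matrix m n R)
    (N : Matrix m m R) : Matrix n n R :=
  K - K * Bᴴ * (B * K * Bᴴ + N)⁻¹ * (B * K)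

theorem mmseErrorCov_vecMulVec [Field R] [Star R] (u w : n → R) (B : Matrix m n R)
    {N : Matrix m m R} (hN : IsUnit N.det) (hd : 1 + (w ᵥ* Bᴴ) ⬝ᵥ N⁻¹ *ᵥ (B *ᵥ u) ≠ 0) :
    mmseErrorCov (vecMulVec u w) B N =
      (1 + (w ᵥ* Bᴴ) ⬝ᵥ N⁻¹ *ᵥ (B *ᵥ u))⁻¹ • vecMulVec u w := by
  set q := (w ᵥ* Bᴴ) ⬝ᵥ N⁻¹ *ᵥ (B *ᵥ u) with hq
  have hcorrection : vecMulVec u w * Bᴴ * (B * vecMulVec u w * Bᴴ + N)⁻¹ * (B * vecMulVec u w) =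
      ((1 + q)⁻¹ * q) • vecMulVec u w := by
    rw [mul_vecMulVec, vecMulVec_mul u, vecMulVec_mul (B *ᵥ u), add_comm, Matrix.mul_assoc,
      mul_vecMulVec, inv_add_vecMulVec_mulVec hN hd, vecMulVec_mul_vecMulVec, dotProduct_smul,
      ← hq, vecMulVec_smul, smul_eq_mul]
  have hcoeff : (1 + q)⁻¹ + (1 + q)⁻¹ * q = 1 := by rw [← mul_one_add, inv_mul_cancel₀ hd]
  rw [mmseErrorCov, hcorrection, sub_eq_iff_eq_add, ← add_smul, hcoeff, one_smul]

end ErrorCovariance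

section RCLike

variable {m n 𝕜 : Type*} [Fintype m] [Fintype n] [RCLike 𝕜]

theorem star_dotProduct_self_eq_sum_norm_sq (v : n → 𝕜) :
    star v ⬝ᵥ v = ((∑ i, ‖v i‖ ^ 2 : ℝ) : 𝕜) := by
  simp [dotProduct, RCLike.conj_mul]

theorem trace_mmseErrorCov_smul_vecMulVec_star [DecidableEq m] (u : n → 𝕜) (B : Matrix m n 𝕜)
    {P s : ℝ} (hP : 0 ≤ P) (hs : 0 < s) :
    trace (mmseErrorCov ((P : 𝕜) • vecMulVec u (star u)) B ((s : 𝕜) • 1)) =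
      ((P * ∑ i, ‖u i‖ ^ 2) / (1 + P / s * ∑ j, ‖(B *ᵥ u) j‖ ^ 2) : ℝ) := by
  have hs' : (s : 𝕜) ≠ 0 := RCLike.ofReal_ne_zero.mpr hs.ne'
  have hN : IsUnit ((s : 𝕜) • (1 : Matrix m m 𝕜)).det := by
    simpa [det_smul] using hs'.isUnit.pow _
  have hNinv : ((s : 𝕜) • (1 : Matrix m m 𝕜))⁻¹ = (s : 𝕜)⁻¹ • 1 :=
    inv_eq_right_inv (by rw [smul_mul_smul_comm, mul_inv_cancel₀ hs', one_smul, mul_one])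
  have hsnr : 1 + (star u ᵥ* Bᴴ) ⬝ᵥ ((s : 𝕜) • (1 : Matrix m m 𝕜))⁻¹ *ᵥ (B *ᵥ ((P : 𝕜) • u)) =
      ((1 + P / s * ∑ j, ‖(B *ᵥ u) j‖ ^ 2 : ℝ) : 𝕜) := by
    rw [hNinv, smul_mulVec, one_mulVec, mulVec_smul, ← star_mulVec, dotProduct_smul,
      dotProduct_smul, star_dotProduct_self_eq_sum_norm_sq]
    push_cast [smul_eq_mul]
    ring
  have hpos : 0 < 1 + P / s * ∑ j, ‖(B *ᵥ u) j‖ ^ 2 := by positivity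
  rw [← smul_vecMulVec, mmseErrorCov_vecMulVec _ _ _ hN
      (by rw [hsnr]; exact RCLike.ofReal_ne_zero.mpr hpos.ne'),
    hsnr, trace_smul, trace_vecMulVec, smul_dotProduct, dotProduct_comm,
    star_dotProduct_self_eq_sum_norm_sq]
  push_cast [smul_eq_mul]
  ring

theorem norm_diagonal_mul_sqrt_mulVec_sq [DecidableEq n] (h u : n → 𝕜) {a : n → ℝ} {t : n}
    (ha : 0 ≤ a t) :
    ‖(diagonal (fun t => h t * (√(a t) : 𝕜)) *ᵥ u) t‖ ^ 2 = ‖h t‖ ^ 2 * ‖u t‖ ^ 2 * a t := by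
  rw [mulVec_diagonal, norm_mul, norm_mul, RCLike.norm_ofReal, mul_pow, mul_pow, sq_abs,
    Real.sq_sqrt ha]
  ring

theorem stmt4_general [DecidableEq n] (u : n → 𝕜) {Px : ℝ} (hPx : 0 ≤ Px)
    (h : n → 𝕜) {a : n → ℝ} (ha : ∀ t, 0 ≤ a t) {σw2 : ℝ} (hσ : 0 < σw2)
    {γ : ℝ} (hγ : γ = 1 / σw2)
    {K : Matrix n n 𝕜} (hK : K = (Px : 𝕜) • vecMulVec u (star u))
    {B : Matrix n n 𝕜} (hB : B = diagonal fun t => h t * (√(a t) : 𝕜))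
    {σx2 : n → ℝ} (hσx2 : ∀ t, σx2 t = Px * ‖u t‖ ^ 2) :
    trace (mmseErrorCov K B ((σw2 : 𝕜) • 1)) =
        ((Px * ∑ t, ‖u t‖ ^ 2) / (1 + γ * Px * ∑ t, ‖h t‖ ^ 2 * ‖u t‖ ^ 2 * a t) : ℝ) ∧
      trace (mmseErrorCov K B ((σw2 : 𝕜) • 1)) =
        ((∑ t, σx2 t) / (1 + γ * ∑ t, ‖h t‖ ^ 2 * σx2 t * a t) : ℝ) := by
  have hsignal : ∑ t, σx2 t = Px * ∑ t, ‖u t‖ ^ 2 := by simp only [hσx2, Finset.mul_sum]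
  have hreceived : ∑ t, ‖h t‖ ^ 2 * σx2 t * a t = Px * ∑ t, ‖h t‖ ^ 2 * ‖u t‖ ^ 2 * a t := by
    rw [Finset.mul_sum]
    exact Finset.sum_congr rfl fun t _ => by rw [hσx2]; ring
  have hgain : Px / σw2 = γ * Px := by rw [hγ, one_div_mul_eq_div]
  rw [hsignal, hreceived, ← mul_assoc, and_self, hK, hB,
    trace_mmseErrorCov_smul_vecMulVec_star u _ hPx hσ, hgain]
  simp only [norm_diagonal_mul_sqrt_mulVec_sq h u (ha _)]

end RCLike

/-- for a rank-one (fully correlated) source `K = P_x u u†` with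
`‖u‖ = 1`, amplify-and-forward sensing `B = diag(h_t √a_t)` and noise variance
`σw²` (`γ = 1/σw²`), the MMSE equals
`P_x / (1 + γ P_x Σ_t |h_t|² |u_t|² a_t) = P_x / (1 + γ Σ_t |h_t|² σ²_{x_t} a_t)`
with `σ²_{x_t} = P_x |u_t|²`. -/
theorem stmt4 (n : ℕ) (hn : 0 < n)
    (u : Fin n → ℂ) (hu : ∑ t, ‖u t‖ ^ 2 = 1)
    (Px : ℝ) (hPx : 0 < Px)
    (h : Fin n → ℂ) (a : Fin n → ℝ) (ha : ∀ t, 0 ≤ a t)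
    (σw2 : ℝ) (hσ : 0 < σw2) (γ : ℝ) (hγ : γ = 1 / σw2)
    (K : Matrix (Fin n) (Fin n) ℂ)
    (hK : K = (Px : ℂ) • Matrix.vecMulVec u (fun t => (starRingEnd ℂ) (u t)))
    (B : Matrix (Fin n) (Fin n) ℂ)
    (hB : B = Matrix.diagonal (fun t => h t * (Real.sqrt (a t) : ℂ)))
    (σx2 : Fin n → ℝ) (hσx2 : ∀ t, σx2 t = Px * ‖u t‖ ^ 2) :
    Matrix.trace
        (K - K * Bᴴ * (B * K * Bᴴ + (σw2 : ℂ) • (1 : Matrix (Fin n) (Fin n) ℂ))⁻¹ * (B * K))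
      = ((Px / (1 + γ * Px * ∑ t, ‖h t‖ ^ 2 * ‖u t‖ ^ 2 * a t) : ℝ) : ℂ)
    ∧ Matrix.trace
        (K - K * Bᴴ * (B * K * Bᴴ + (σw2 : ℂ) • (1 : Matrix (Fin n) (Fin n) ℂ))⁻¹ * (B * K))
      = ((Px / (1 + γ * ∑ t, ‖h t‖ ^ 2 * σx2 t * a t) : ℝ) : ℂ) := by
  simpa only [mmseErrorCov, RCLike.ofReal_eq_complex_ofReal, hσx2, ← Finset.mul_sum, hu,
    mul_one] using
    stmt4_general u hPx.le h ha hσ hγ hK hB hσx2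
end

section
/- Let n be a positive integer, let c_1,…,c_n ≥ 0 (the channel power gains c_t = |h_t|²) and E_1,…,E_n ≥ 0 be given. Then: (i) for every q ∈ ℝ^n with q_t ≥ 0, Σ_{l=1}^t q_l ≤ Σ_{l=1}^t E_l for all t = 1,…,n−1, and Σ_{l=1}^n q_l = Σ_{l=1}^n E_l, one has Σ_{t=1}^n c_t q_t ≤ Σ_{l=1}^n E_l · max_{t ≥ l} c_t; and (ii) there exists such a feasible q attaining equality. Consequently, the recursive procedure that repeatedly transmits all accumulated energy at the remaining time slot with the highest channel gain maximizes Σ_t c_t q_t subject to the energy causality constraints. -/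
/-!
Let `M l` be the best gain still available at time `l`. Replacing `c` by `M` only raises the
objective, and since `M` is antitone, Abel summation shows that `∑ M t * q t` is largest when energy
is spent as early as causality allows, that is, when `q = E`. The resulting bound `∑ M l * E l` is
attained by holding the energy harvested at each `l` until a slot `t ≥ l` where `c t = M l`.
-/

section AbelSummation

variable {ι R : Type*} [LinearOrder ι] [Ring R]

theorem mul_sum_le_sum_mul_of_antitoneOn [PartialOrder R] [IsOrderedRing R] {s : Finset ι}
    {f d : ι → R} {m : R} (hf : AntitoneOn f s) (hm : ∀ t ∈ s, m ≤ f t)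
    (hd : ∀ t ∈ s, 0 ≤ ∑ l ∈ s with l ≤ t, d l) :
    m * ∑ t ∈ s, d t ≤ ∑ t ∈ s, f t * d t := by
  induction s using Finset.induction_on_max generalizing m with
  | empty => simp
  | insert a s hlt ih =>
    have ha : a ∉ s := fun h => lt_irrefl a (hlt a h)
    have ha_mem : a ∈ insert a s := Finset.mem_insert_self a s
    have hs_mem : ∀ t ∈ s, t ∈ insert a s := fun t => Finset.mem_insert_of_mem
    have hle : ∀ t ∈ insert a s, t ≤ a :=
      Finset.forall_mem_insert .. |>.2 ⟨le_rfl, fun t ht => (hlt t ht).le⟩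
    have htotal : 0 ≤ ∑ t ∈ insert a s, d t := by
      simpa only [Finset.filter_true_of_mem hle] using hd a ha_mem
    have hs : f a * ∑ t ∈ s, d t ≤ ∑ t ∈ s, f t * d t := by
      refine ih (hf.mono (by simp)) (fun t ht => hf (hs_mem t ht) ha_mem (hlt t ht).le)
        fun t ht => ?_
      simpa only [Finset.filter_insert, (hlt t ht).not_ge, if_false] using hd t (hs_mem t ht)
    calc m * ∑ t ∈ insert a s, d t
        ≤ f a * ∑ t ∈ insert a s, d t := mul_le_mul_of_nonneg_right (hm a ha_mem) htotal
      _ = f a * d a + f a * ∑ t ∈ s, d t := by rw [Finset.sum_insert ha, mul_add]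
      _ ≤ f a * d a + ∑ t ∈ s, f t * d t := by gcongr
      _ = ∑ t ∈ insert a s, f t * d t := by rw [Finset.sum_insert ha]

theorem sum_mul_le_sum_mul_of_antitone [Fintype ι] [LocallyFiniteOrderBot ι] [LinearOrder R]
    [IsOrderedRing R] {f a b : ι → R} (hf : Antitone f)
    (hle : ∀ t, ∑ l ∈ Finset.Iic t, a l ≤ ∑ l ∈ Finset.Iic t, b l) (hsum : ∑ t, a t = ∑ t, b t) :
    ∑ t, f t * a t ≤ ∑ t, f t * b t := by
  obtain ⟨m, hm⟩ := (Set.finite_range f).bddBelow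
  have habel : m * ∑ t, (b t - a t) ≤ ∑ t, f t * (b t - a t) := by
    refine mul_sum_le_sum_mul_of_antitoneOn (hf.antitoneOn _) (fun t _ => hm ⟨t, rfl⟩) fun t _ => ?_
    rw [Finset.filter_ge_eq_Iic, Finset.sum_sub_distrib]
    exact sub_nonneg.2 (hle t)
  simpa only [mul_sub, Finset.sum_sub_distrib, hsum, sub_self, mul_zero, sub_nonneg] using habel

end AbelSummation

section PeakGain

variable {ι R : Type*} [Preorder ι] [LocallyFiniteOrderTop ι]

/-- The largest gain `max_{t ≥ l} c t` among the slots that remain at time `l`. -/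
def peakGain [SemilatticeSup R] (c : ι → R) (l : ι) : R :=
  (Finset.Ici l).sup' Finset.nonempty_Ici c

theorem le_peakGain [SemilatticeSup R] (c : ι → R) (l : ι) : c l ≤ peakGain c l :=
  Finset.le_sup' c (Finset.mem_Ici.2 le_rfl)

theorem antitone_peakGain [SemilatticeSup R] (c : ι → R) : Antitone (peakGain c) :=
  fun _ _ h => Finset.sup'_mono c (Finset.Ici_subset_Ici.2 h) _

theorem exists_le_and_peakGain_eq [LinearOrder R] (c : ι → R) (l : ι) :
    ∃ t, l ≤ t ∧ peakGain c l = c t := by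
  simpa only [peakGain, Finset.mem_Ici] using Finset.exists_mem_eq_sup' Finset.nonempty_Ici c

end PeakGain

/-- The allocations `q` allowed by the energy arrivals `E`: they are nonnegative, by any time at
most the energy harvested so far has been spent, and in the end all of it has. As the energy
spent in slot `t` may include that harvested in `t`, the partial sums run over closed intervals. -/
structure IsEnergyCausal {ι R : Type*} [Fintype ι] [Preorder ι] [LocallyFiniteOrderBot ι]
    [AddCommMonoid R] [Preorder R] (E q : ι → R) : Prop where
  nonneg : ∀ t, 0 ≤ q t
  sum_Iic_le : ∀ t, ∑ l ∈ Finset.Iic t, q l ≤ ∑ l ∈ Finset.Iic t, E l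
  sum_eq : ∑ l, q l = ∑ l, E l

theorem IsEnergyCausal.sum_mul_le_sum_peakGain_mul {ι R : Type*} [Fintype ι] [LinearOrder ι]
    [LocallyFiniteOrderBot ι] [LocallyFiniteOrderTop ι] [Ring R] [LinearOrder R] [IsOrderedRing R]
    {E q : ι → R} (hq : IsEnergyCausal E q) (c : ι → R) :
    ∑ t, c t * q t ≤ ∑ l, peakGain c l * E l :=
  calc ∑ t, c t * q t
      ≤ ∑ t, peakGain c t * q t :=
        Finset.sum_le_sum fun t _ => mul_le_mul_of_nonneg_right (le_peakGain c t) (hq.nonneg t)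
    _ ≤ ∑ l, peakGain c l * E l :=
        sum_mul_le_sum_mul_of_antitone (antitone_peakGain c) hq.sum_Iic_le hq.sum_eq

section DeferredAllocation

variable {ι R : Type*} [Fintype ι] [DecidableEq ι]

/-- The allocation that spends the energy harvested at each time `l` in slot `σ l`; it is
optimal when `l ≤ σ l` and `c (σ l) = peakGain c l` for all `l`. -/
def deferredAllocation [AddCommMonoid R] (σ : ι → ι) (E : ι → R) (t : ι) : R :=
  ∑ l with σ l = t, E l

theorem sum_deferredAllocation [AddCommMonoid R] (σ : ι → ι) (E : ι → R) (s : Finset ι) :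
    ∑ t ∈ s, deferredAllocation σ E t = ∑ l with σ l ∈ s, E l :=
  Finset.sum_fiberwise_eq_sum_filter _ _ _ _

theorem sum_mul_deferredAllocation [NonUnitalNonAssocSemiring R] (c : ι → R) (σ : ι → ι)
    (E : ι → R) : ∑ t, c t * deferredAllocation σ E t = ∑ l, c (σ l) * E l :=
  calc ∑ t, c t * deferredAllocation σ E t
      = ∑ t, ∑ l with σ l = t, c (σ l) * E l := by
        refine Finset.sum_congr rfl fun t _ => ?_
        rw [deferredAllocation, Finset.mul_sum]
        exact Finset.sum_congr rfl fun l hl => by rw [(Finset.mem_filter.1 hl).2]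
    _ = ∑ l, c (σ l) * E l := Finset.sum_fiberwise _ _ _

theorem isEnergyCausal_deferredAllocation [Preorder ι] [LocallyFiniteOrderBot ι] [AddCommMonoid R]
    [PartialOrder R] [IsOrderedAddMonoid R] {σ : ι → ι} {E : ι → R} (hσ : ∀ l, l ≤ σ l)
    (hE : ∀ l, 0 ≤ E l) : IsEnergyCausal E (deferredAllocation σ E) where
  nonneg t := Finset.sum_nonneg fun l _ => hE l
  sum_Iic_le t := by
    have hsub : ({l | σ l ∈ Finset.Iic t} : Finset ι) ⊆ Finset.Iic t := fun l hl =>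
      Finset.mem_Iic.2 <| (hσ l).trans <| Finset.mem_Iic.1 (Finset.mem_filter.1 hl).2
    rw [sum_deferredAllocation]
    exact Finset.sum_le_sum_of_subset_of_nonneg hsub fun l _ _ => hE l
  sum_eq := Finset.sum_fiberwise _ _ _

end DeferredAllocation

theorem stmt6_general {ι R : Type*} [Fintype ι] [LinearOrder ι] [LocallyFiniteOrderBot ι]
    [LocallyFiniteOrderTop ι] [CommRing R] [LinearOrder R] [IsOrderedRing R] (c E : ι → R)
    (hE : ∀ t, 0 ≤ E t) :
    (∀ q, IsEnergyCausal E q → ∑ t, c t * q t ≤ ∑ l, E l * peakGain c l) ∧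
      ∃ q, IsEnergyCausal E q ∧ ∑ t, c t * q t = ∑ l, E l * peakGain c l := by
  simp only [mul_comm (E _)]
  choose σ hσ hpeak using exists_le_and_peakGain_eq c
  refine ⟨fun q hq => hq.sum_mul_le_sum_peakGain_mul c, deferredAllocation σ E,
    isEnergyCausal_deferredAllocation hσ hE, ?_⟩
  simp only [hpeak, sum_mul_deferredAllocation]

/-- paper's Lemma 3: with channel power gains `c_t ≥ 0` and energy
arrivals `E_l ≥ 0`, (i) every energy-causal allocation `q` satisfies
`Σ_t c_t q_t ≤ Σ_l E_l · max_{t ≥ l} c_t`, and (ii) some energy-causal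
allocation attains this bound; hence transmitting all accumulated energy at the
remaining slot with the highest gain is optimal. -/
theorem stmt6 (n : ℕ) (hn : 0 < n)
    (c E : Fin n → ℝ) (hc : ∀ t, 0 ≤ c t) (hE : ∀ t, 0 ≤ E t) :
    (∀ q : Fin n → ℝ, (∀ t, 0 ≤ q t) →
      (∀ t : Fin n, ∑ l ∈ Finset.Iic t, q l ≤ ∑ l ∈ Finset.Iic t, E l) →
      (∑ l, q l = ∑ l, E l) →
      ∑ t, c t * q t
        ≤ ∑ l, E l * (Finset.Ici l).sup' ⟨l, Finset.mem_Ici.mpr le_rfl⟩ c)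
    ∧ (∃ q : Fin n → ℝ, (∀ t, 0 ≤ q t) ∧
      (∀ t : Fin n, ∑ l ∈ Finset.Iic t, q l ≤ ∑ l ∈ Finset.Iic t, E l) ∧
      (∑ l, q l = ∑ l, E l) ∧
      ∑ t, c t * q t
        = ∑ l, E l * (Finset.Ici l).sup' ⟨l, Finset.mem_Ici.mpr le_rfl⟩ c) := by
  obtain ⟨hbound, q, hq, hqc⟩ := stmt6_general c E hE
  exact ⟨fun q h₀ h₁ h₂ => hbound q ⟨h₀, h₁, h₂⟩, q, hq.nonneg, hq.sum_Iic_le, hq.sum_eq, hqc⟩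
end

section
/- Let n, s be positive integers with s ≤ n, U ∈ ℂ^{n×s} with U†U = I_s, P_x > 0, γ > 0, and set K = (P_x/s) U U† and σ²_{x_t} = [K]_{tt}. For every a ∈ ℝ^n with a_t ≥ 0 and Σ_{t=1}^n a_t σ²_{x_t} = E_tot, it holds that tr[((s/P_x) I_s + γ U† diag(a_1,…,a_n) U)⁻¹] ≥ P_x / (1 + γ E_tot/s). Moreover, the uniform allocation a_t = E_tot/P_x for all t satisfies the total-energy constraint and achieves equality. -/
open Matrix
open scoped ComplexOrder

/-!
For a positive definite `M` of size `s` and the scalar `c = s / tr M`, the matrix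
`(1 - cM)ᴴ M⁻¹ (1 - cM) = M⁻¹ - 2c + c²M` is positive semidefinite, and taking traces gives
`s² / tr M ≤ tr M⁻¹`. The trace of the matrix `(s/P_x) I + γ U† diag(a) U` depends on `a` only
through the total energy, so this bound is the same for all feasible allocations. The uniform one
makes the matrix a multiple of `I` when `U†U = I`, which is the equality case.
-/

section TraceInv

variable {ι : Type*} [Fintype ι] [DecidableEq ι]

theorem conjTranspose_one_sub_smul_mul_inv_mul_self {R : Type*} [CommRing R] [StarRing R]
    {M : Matrix ι ι R} (hM : M.IsHermitian) (hdet : IsUnit M.det) {c : R}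
    (hc : IsSelfAdjoint c) :
    (1 - c • M)ᴴ * M⁻¹ * (1 - c • M) = M⁻¹ - (2 * c) • 1 + c ^ 2 • M := by
  rw [conjTranspose_sub, conjTranspose_one, conjTranspose_smul, hM.eq, hc.star_eq]
  simp only [sub_mul, mul_sub, one_mul, mul_one, smul_mul_assoc, mul_smul_comm,
    mul_nonsing_inv _ hdet, nonsing_inv_mul _ hdet]
  module

theorem sq_card_div_trace_le_trace_inv {𝕜 : Type*} [RCLike 𝕜] {M : Matrix ι ι 𝕜}
    (hM : M.PosDef) : (Fintype.card ι : 𝕜) ^ 2 / M.trace ≤ M⁻¹.trace := by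
  cases isEmpty_or_nonempty ι with
  | inl _ => simp
  | inr _ =>
    have htrace : M.trace ≠ 0 := hM.trace_pos.ne'
    set c : 𝕜 := Fintype.card ι / M.trace with hc
    have hc_star : IsSelfAdjoint c :=
      (IsSelfAdjoint.natCast _).div (IsSelfAdjoint.of_nonneg hM.trace_pos.le)
    have hnonneg := (hM.inv.posSemidef.conjTranspose_mul_mul_same (1 - c • M)).trace_nonneg
    rw [conjTranspose_one_sub_smul_mul_inv_mul_self hM.isHermitian
      ((isUnit_iff_isUnit_det M).mp hM.isUnit) hc_star] at hnonneg
    have hcompleted : (M⁻¹ - (2 * c) • 1 + c ^ 2 • M).trace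
        = M⁻¹.trace - (Fintype.card ι : 𝕜) ^ 2 / M.trace := by
      simp only [trace_add, trace_sub, trace_smul, trace_one, smul_eq_mul, hc]
      field_simp
      ring
    exact sub_nonneg.mp (hcompleted ▸ hnonneg)

theorem trace_inv_smul_one {K : Type*} [Field K] {c : K} (hc : c ≠ 0) :
    (c • (1 : Matrix ι ι K))⁻¹.trace = Fintype.card ι / c := by
  have hinv : (c • (1 : Matrix ι ι K))⁻¹ = c⁻¹ • 1 :=
    inv_eq_right_inv (by rw [smul_mul_smul_comm, mul_one, mul_inv_cancel₀ hc, one_smul])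
  rw [hinv, trace_smul, trace_one, smul_eq_mul, inv_mul_eq_div]

end TraceInv

section Gram

variable {𝕜 m ι : Type*} [RCLike 𝕜] [Fintype m] [Fintype ι]

theorem trace_conjTranspose_mul_diagonal_mul [DecidableEq m] (U : Matrix m ι 𝕜) (d : m → 𝕜) :
    (Uᴴ * diagonal d * U).trace = ∑ t, d t * ∑ k, (‖U t k‖ : 𝕜) ^ 2 := by
  rw [Matrix.mul_assoc, trace_mul_comm, Matrix.mul_assoc]
  simp only [trace, diag_apply, diagonal_mul]
  simp only [mul_apply, conjTranspose_apply, RCLike.star_def, RCLike.mul_conj]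

theorem sum_norm_sq_of_conjTranspose_mul_self_eq_one [DecidableEq ι] {U : Matrix m ι 𝕜}
    (hU : Uᴴ * U = 1) : ∑ t, ∑ k, ‖U t k‖ ^ 2 = (Fintype.card ι : ℝ) := by
  classical
  have htrace := trace_conjTranspose_mul_diagonal_mul U 1
  simp only [Pi.one_def, diagonal_one, Matrix.mul_one, hU, trace_one, one_mul] at htrace
  exact_mod_cast htrace.symm

end Gram

/-- The precision (inverse error covariance) of the coordinates `w` of a signal `U w`, where `w`
has prior precision `κ` in each coordinate and sample `t` is observed with power `a t` and inverse
noise variance `γ`. By the Woodbury identity the trace of its inverse is the MMSE. -/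
noncomputable def posteriorPrecision {𝕜 m ι : Type*} [RCLike 𝕜] [Fintype m] [DecidableEq m]
    [DecidableEq ι] (κ γ : ℝ) (U : Matrix m ι 𝕜) (a : m → ℝ) : Matrix ι ι 𝕜 :=
  κ • (1 : Matrix ι ι 𝕜) + (γ : 𝕜) • (Uᴴ * diagonal (fun t => (a t : 𝕜)) * U)

namespace posteriorPrecision

variable {𝕜 m ι : Type*} [RCLike 𝕜] [Fintype m] [DecidableEq m] [DecidableEq ι]
  {κ γ : ℝ} {U : Matrix m ι 𝕜} {a : m → ℝ}

theorem posDef [Finite ι] (hκ : 0 < κ) (hγ : 0 ≤ γ) (ha : ∀ t, 0 ≤ a t) :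
    (posteriorPrecision κ γ U a).PosDef := by
  have hdiag : (diagonal fun t => (a t : 𝕜)).PosSemidef :=
    PosSemidef.diagonal fun t => RCLike.ofReal_nonneg.mpr (ha t)
  exact (PosDef.one.smul hκ).add_posSemidef
    ((hdiag.conjTranspose_mul_mul_same U).smul (RCLike.ofReal_nonneg.mpr hγ))

theorem const_eq_smul_one (hU : Uᴴ * U = 1) (b : ℝ) :
    posteriorPrecision κ γ U (fun _ => b) = ((κ + γ * b : ℝ) : 𝕜) • 1 := by
  rw [posteriorPrecision, ← smul_one_eq_diagonal, Matrix.mul_smul, Matrix.mul_one,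
    Matrix.smul_mul, hU, smul_smul, RCLike.real_smul_eq_coe_smul (K := 𝕜), ← add_smul]
  norm_cast

variable [Fintype ι]

theorem trace_eq (κ γ : ℝ) (U : Matrix m ι 𝕜) (a : m → ℝ) :
    (posteriorPrecision κ γ U a).trace
      = ((κ * Fintype.card ι + γ * ∑ t, a t * ∑ k, ‖U t k‖ ^ 2 : ℝ) : 𝕜) := by
  rw [posteriorPrecision, trace_add, trace_smul, trace_smul, trace_one,
    trace_conjTranspose_mul_diagonal_mul, RCLike.real_smul_eq_coe_mul, smul_eq_mul]
  norm_cast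

theorem sq_card_div_le_trace_inv (hκ : 0 < κ) (hγ : 0 ≤ γ) (ha : ∀ t, 0 ≤ a t) :
    (((Fintype.card ι : ℝ) ^ 2
        / (κ * Fintype.card ι + γ * ∑ t, a t * ∑ k, ‖U t k‖ ^ 2) : ℝ) : 𝕜)
      ≤ (posteriorPrecision κ γ U a)⁻¹.trace := by
  have hbound := sq_card_div_trace_le_trace_inv (posDef (U := U) hκ hγ ha)
  rw [trace_eq] at hbound
  exact_mod_cast hbound

theorem trace_inv_const (hU : Uᴴ * U = 1) {b : ℝ} (hb : κ + γ * b ≠ 0) :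
    (posteriorPrecision κ γ U (fun _ => b))⁻¹.trace
      = ((Fintype.card ι / (κ + γ * b) : ℝ) : 𝕜) := by
  rw [const_eq_smul_one hU, trace_inv_smul_one (RCLike.ofReal_ne_zero.mpr hb)]
  norm_cast

end posteriorPrecision

theorem stmt7_general {𝕜 m ι : Type*} [RCLike 𝕜] [Fintype m] [DecidableEq m] [Fintype ι]
    [DecidableEq ι] [Nonempty ι] (U : Matrix m ι 𝕜) {Px γ Etot : ℝ} (hPx : 0 < Px) (hγ : 0 ≤ γ)
    (hEtot : 0 ≤ Etot) (σx2 : m → ℝ)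
    (hσx2 : ∀ t, σx2 t = (Px / Fintype.card ι) * ∑ k, ‖U t k‖ ^ 2) :
    (∀ a : m → ℝ, (∀ t, 0 ≤ a t) → ∑ t, a t * σx2 t = Etot →
      ((Px / (1 + γ * Etot / Fintype.card ι) : ℝ) : 𝕜)
        ≤ (posteriorPrecision (Fintype.card ι / Px) γ U a)⁻¹.trace)
    ∧ (Uᴴ * U = 1 →
      ∑ t, (Etot / Px) * σx2 t = Etot
      ∧ (posteriorPrecision (Fintype.card ι / Px) γ U fun _ => Etot / Px)⁻¹.trace
        = ((Px / (1 + γ * Etot / Fintype.card ι) : ℝ) : 𝕜)) := by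
  have hs : (0 : ℝ) < Fintype.card ι := by exact_mod_cast Fintype.card_pos
  refine ⟨fun a ha hsum => ?_, fun hU => ⟨?_, ?_⟩⟩
  · have henergy : ∑ t, a t * ∑ k, ‖U t k‖ ^ 2 = Fintype.card ι / Px * Etot := by
      simp only [← hsum, hσx2, Finset.mul_sum]
      field_simp
    convert posteriorPrecision.sq_card_div_le_trace_inv (U := U) (div_pos hs hPx) hγ ha using 2
    rw [henergy]
    field_simp
  · simp only [hσx2, ← Finset.mul_sum, sum_norm_sq_of_conjTranspose_mul_self_eq_one hU]
    field_simp
  · rw [posteriorPrecision.trace_inv_const hU (by positivity)]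
    congr 1
    field_simp


/-- paper's Lemma 4: for the flat-spectrum low-rank source
`K = (P_x/s) U U†` (with `U†U = I_s`, component variances
`σ²_{x_t} = [K]_{tt} = (P_x/s) Σ_k |U_{tk}|²`) over a static channel, every
allocation `a ≥ 0` with `Σ_t a_t σ²_{x_t} = E_tot` has MMSE
`tr[((s/P_x)I_s + γ U† diag(a) U)⁻¹] ≥ P_x / (1 + γ E_tot/s)`; moreover the
uniform allocation `a_t = E_tot/P_x` is feasible and attains the bound. -/
theorem stmt7 (n s : ℕ) (hn : 0 < n) (hs : 0 < s) (hsn : s ≤ n)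
    (U : Matrix (Fin n) (Fin s) ℂ) (hU : Uᴴ * U = 1)
    (Px γ Etot : ℝ) (hPx : 0 < Px) (hγ : 0 < γ) (hEtot : 0 ≤ Etot)
    (σx2 : Fin n → ℝ) (hσx2 : ∀ t, σx2 t = (Px / s) * ∑ k, ‖U t k‖ ^ 2) :
    (∀ a : Fin n → ℝ, (∀ t, 0 ≤ a t) → (∑ t, a t * σx2 t = Etot) →
      ((Px / (1 + γ * Etot / s) : ℝ) : ℂ)
        ≤ Matrix.trace
            ((((s : ℝ) / Px : ℝ) • (1 : Matrix (Fin s) (Fin s) ℂ)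
                + (γ : ℂ) • (Uᴴ * Matrix.diagonal (fun t => (a t : ℂ)) * U))⁻¹))
    ∧ (∑ t : Fin n, (Etot / Px) * σx2 t = Etot)
    ∧ Matrix.trace
          ((((s : ℝ) / Px : ℝ) • (1 : Matrix (Fin s) (Fin s) ℂ)
              + (γ : ℂ) • (Uᴴ * Matrix.diagonal (fun _ : Fin n => ((Etot / Px : ℝ) : ℂ)) * U))⁻¹)
        = ((Px / (1 + γ * Etot / s) : ℝ) : ℂ) := by
  have : Nonempty (Fin s) := Fin.pos_iff_nonempty.mp hs
  obtain ⟨hbound, huniform⟩ := stmt7_general U hPx hγ.le hEtot σx2 (by simpa using hσx2)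
  simp only [Fintype.card_fin] at hbound huniform
  exact ⟨hbound, huniform hU⟩
end

section
/- Let n be a positive integer, P_x > 0, ρ ∈ ℝ with ρ < 1 and ρ(n−1) + 1 > 0, and let K(ρ) = (P_x/n)((1−ρ) I_n + ρ J_n), where J_n is the all-ones matrix. Let γ > 0 and define err(a) = tr[(K(ρ)⁻¹ + γ diag(a_1,…,a_n))⁻¹] for a ∈ ℝ^n with nonnegative entries. Then err is Schur-convex: if a ≺ b with a, b entrywise nonnegative, then err(a) ≤ err(b). Consequently, regardless of the value of ρ (i.e. of the level of statistical dependence between signal components), any energy-feasible allocation majorized by every energy-feasible allocation minimizes err. -/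
open Matrix

/-- `a` is majorized by `b` (written `a ≺ b`): for every `k`, the sum of the `k`
largest entries of `a` is at most the sum of the `k` largest entries of `b`,
and the total sums agree. -/
def Majorizes {n : ℕ} (a b : Fin n → ℝ) : Prop :=
  (∀ k : ℕ, k < n → ∀ s : Finset (Fin n), s.card = k →
      ∃ t : Finset (Fin n), t.card = k ∧ ∑ i ∈ s, a i ≤ ∑ i ∈ t, b i) ∧
  (∑ i, a i = ∑ i, b i)

/-!
A function that is quasiconvex and invariant under permutations of its arguments is Schur-convex:
by Rado's theorem `a ≺ b` puts `a` in the convex hull of the rearrangements of `b`, and all of these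
lie in the sublevel set of `b`. Rado's theorem is proved by separation: a linear functional that is
strictly smaller at `a` than at all rearrangements of `b` is ruled out by Abel summation along a
sorting of its coefficients.

The error is convex because the inverse is operator convex on positive definite matrices, which
follows from the tangent bound `B⁻¹ - A⁻¹ + A⁻¹ (B - A) A⁻¹ = (B⁻¹ - A⁻¹) B (B⁻¹ - A⁻¹) ≥ 0`. It is
symmetric because equicorrelation is invariant under relabelling the components.
-/

section Majorization

theorem mul_sum_le_sum_mul_of_monotoneOn {ι R : Type*} [LinearOrder ι] [Ring R] [PartialOrder R]
    [IsOrderedRing R] {s : Finset ι} {c d : ι → R} {M : R} (hc : MonotoneOn c s)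
    (hM : ∀ i ∈ s, c i ≤ M) (hd : ∀ i ∈ s, ∑ j ∈ s with j ≤ i, d j ≤ 0) :
    M * ∑ i ∈ s, d i ≤ ∑ i ∈ s, c i * d i := by
  induction s using Finset.induction_on_max generalizing M with
  | empty => simp
  | insert m s hlt ih =>
    have hm : m ∉ s := fun h => (hlt m h).false
    have hinit : c m * ∑ i ∈ s, d i ≤ ∑ i ∈ s, c i * d i := by
      refine ih (hc.mono (by simp)) (fun i hi => hc (by simp [hi]) (by simp) (hlt i hi).le)
        fun i hi => ?_
      simpa [Finset.filter_insert, (hlt i hi).not_ge] using hd i (Finset.mem_insert_of_mem hi)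
    have htotal : ∑ i ∈ insert m s, d i ≤ 0 := by
      have hfilter : {j ∈ insert m s | j ≤ m} = insert m s :=
        Finset.filter_true_of_mem (by simpa using fun i hi => (hlt i hi).le)
      simpa only [hfilter] using hd m (Finset.mem_insert_self m s)
    calc M * ∑ i ∈ insert m s, d i
      _ ≤ c m * ∑ i ∈ insert m s, d i :=
        mul_le_mul_of_nonpos_right (hM m (Finset.mem_insert_self m s)) htotal
      _ = c m * d m + c m * ∑ i ∈ s, d i := by rw [Finset.sum_insert hm, mul_add]
      _ ≤ c m * d m + ∑ i ∈ s, c i * d i := by gcongr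
      _ = ∑ i ∈ insert m s, c i * d i := by rw [Finset.sum_insert hm]

theorem sum_le_sum_Iic_of_antitone {ι M : Type*} [LinearOrder ι] [LocallyFiniteOrderBot ι]
    [AddCommMonoid M] [PartialOrder M] [IsOrderedAddMonoid M] {f : ι → M} (hf : Antitone f)
    {i : ι} {t : Finset ι} (ht : t.card = (Finset.Iic i).card) :
    ∑ j ∈ t, f j ≤ ∑ j ∈ Finset.Iic i, f j := by
  have hcard : (t \ Finset.Iic i).card = (Finset.Iic i \ t).card := Finset.card_sdiff_comm ht
  have houtside : ∑ j ∈ t \ Finset.Iic i, f j ≤ (t \ Finset.Iic i).card • f i :=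
    Finset.sum_le_card_nsmul _ _ _ fun j hj => hf (by grind)
  have hinside : (Finset.Iic i \ t).card • f i ≤ ∑ j ∈ Finset.Iic i \ t, f j :=
    Finset.card_nsmul_le_sum _ _ _ fun j hj => hf (by grind)
  calc ∑ j ∈ t, f j
    _ = ∑ j ∈ t ∩ Finset.Iic i, f j + ∑ j ∈ t \ Finset.Iic i, f j :=
      (Finset.sum_inter_add_sum_sdiff t _ f).symm
    _ ≤ ∑ j ∈ t ∩ Finset.Iic i, f j + ∑ j ∈ Finset.Iic i \ t, f j := by
      grw [houtside, hcard, hinside]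
    _ = ∑ j ∈ Finset.Iic i, f j := by
      rw [Finset.inter_comm, Finset.sum_inter_add_sum_sdiff]

variable {n : ℕ} {a b : Fin n → ℝ}

theorem Majorizes.exists_card_eq_sum_le (h : Majorizes a b) (s : Finset (Fin n)) :
    ∃ t : Finset (Fin n), t.card = s.card ∧ ∑ i ∈ s, a i ≤ ∑ i ∈ t, b i := by
  rcases (card_finset_fin_le s).lt_or_eq with hlt | heq
  · exact h.1 s.card hlt s rfl
  · obtain rfl : s = Finset.univ := (Finset.card_eq_iff_eq_univ s).1 (by simpa using heq)
    exact ⟨Finset.univ, rfl, h.2.le⟩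

theorem Majorizes.comp_perm (h : Majorizes a b) (σ τ : Equiv.Perm (Fin n)) :
    Majorizes (a ∘ σ) (b ∘ τ) := by
  refine ⟨fun k _ s hs => ?_, ?_⟩
  · obtain ⟨t, ht, hle⟩ := h.exists_card_eq_sum_le (s.map σ.toEmbedding)
    exact ⟨t.map τ.symm.toEmbedding, by simpa [hs] using ht, by simpa using hle⟩
  · simpa only [Function.comp_apply, Equiv.sum_comp] using h.2

theorem Majorizes.sum_Iic_le_sum_Iic (h : Majorizes a b) (hb : Antitone b) (i : Fin n) :
    ∑ j ∈ Finset.Iic i, a j ≤ ∑ j ∈ Finset.Iic i, b j :=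
  let ⟨_, ht, hle⟩ := h.exists_card_eq_sum_le (Finset.Iic i)
  hle.trans (sum_le_sum_Iic_of_antitone hb ht)

theorem Majorizes.sum_mul_le_sum_mul {c : Fin n → ℝ} (h : Majorizes a b) (hc : Monotone c)
    (hb : Antitone b) : ∑ i, c i * b i ≤ ∑ i, c i * a i := by
  obtain ⟨M, hM⟩ := (Set.finite_range c).bddAbove
  have habel : M * ∑ i, (a i - b i) ≤ ∑ i, c i * (a i - b i) := by
    refine mul_sum_le_sum_mul_of_monotoneOn (hc.monotoneOn _) (fun i _ => hM ⟨i, rfl⟩)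
      fun i _ => ?_
    simpa [Finset.filter_ge_eq_Iic] using h.sum_Iic_le_sum_Iic hb i
  simpa [Finset.sum_sub_distrib, mul_sub, h.2] using habel

theorem Majorizes.exists_perm_sum_mul_le (h : Majorizes a b) (c : Fin n → ℝ) :
    ∃ σ : Equiv.Perm (Fin n), ∑ i, c i * b (σ i) ≤ ∑ i, c i * a i := by
  let τ := Tuple.sort c
  let π := Tuple.sort (OrderDual.toDual ∘ b)
  have hsorted : ∑ i, c (τ i) * b (π i) ≤ ∑ i, c (τ i) * a (τ i) :=
    (h.comp_perm τ π).sum_mul_le_sum_mul (Tuple.monotone_sort c)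
      (Tuple.monotone_sort (OrderDual.toDual ∘ b))
  refine ⟨τ.symm.trans π, ?_⟩
  rw [← Equiv.sum_comp τ, ← Equiv.sum_comp τ fun i => c i * a i]
  simpa using hsorted

theorem Majorizes.mem_convexHull_range_comp_perm (h : Majorizes a b) :
    a ∈ convexHull ℝ (Set.range fun σ : Equiv.Perm (Fin n) => b ∘ σ) := by
  by_contra ha
  obtain ⟨f, u, hfa, hfb⟩ := geometric_hahn_banach_point_closed (convex_convexHull ℝ _)
    ((Set.finite_range _).isClosed_convexHull ℝ) ha
  have hf (x : Fin n → ℝ) : f x = ∑ i, f (Pi.single i 1) * x i := by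
    conv_lhs => rw [pi_eq_sum_univ' x]
    simp [mul_comm]
  obtain ⟨σ, hσ⟩ := h.exists_perm_sum_mul_le fun i => f (Pi.single i 1)
  have hfσ : f (b ∘ σ) ≤ f a := by rwa [hf, hf a]
  exact ((hfa.trans (hfb _ (subset_convexHull ℝ _ ⟨σ, rfl⟩))).trans_le hfσ).false

/-- Schur-convexity on `s`: `f` is monotone for majorization between points of `s`. -/
def SchurConvexOn {n : ℕ} {β : Type*} [LE β] (s : Set (Fin n → ℝ)) (f : (Fin n → ℝ) → β) : Prop :=
  ∀ ⦃a⦄, a ∈ s → ∀ ⦃b⦄, b ∈ s → Majorizes a b → f a ≤ f b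

variable {β : Type*} [Preorder β] {s t : Set (Fin n → ℝ)} {f : (Fin n → ℝ) → β}

theorem schurConvexOn_of_quasiconvexOn (hf : QuasiconvexOn ℝ s f)
    (hs : ∀ x ∈ s, ∀ σ : Equiv.Perm (Fin n), x ∘ σ ∈ s)
    (hperm : ∀ x ∈ s, ∀ σ : Equiv.Perm (Fin n), f (x ∘ σ) = f x) : SchurConvexOn s f := by
  intro a _ b hb hab
  have hrange : Set.range (fun σ : Equiv.Perm (Fin n) => b ∘ σ) ⊆ {x ∈ s | f x ≤ f b} :=
    Set.range_subset_iff.2 fun σ => ⟨hs b hb σ, (hperm b hb σ).le⟩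
  exact (convexHull_min hrange (hf (f b)) hab.mem_convexHull_range_comp_perm).2

theorem SchurConvexOn.isMinOn (hf : SchurConvexOn s f) (hts : t ⊆ s) (ha : a ∈ t)
    (hmaj : ∀ b ∈ t, Majorizes a b) : IsMinOn f t a :=
  fun b hb => hf (hts ha) (hts hb) (hmaj b hb)

end Majorization

section InverseConvexity

open scoped ComplexOrder MatrixOrder

variable {ι 𝕜 : Type*} [RCLike 𝕜]

theorem convex_setOf_posDef : Convex ℝ {A : Matrix ι ι 𝕜 | A.PosDef} :=
  convex_iff_forall_pos.2 fun _ hA _ hB _ _ hp hq _ => (hA.smul hp).add (hB.smul hq)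

variable [Fintype ι] [DecidableEq ι]

theorem inv_sub_inv_mul_sub_mul_inv_le_inv {A B : Matrix ι ι 𝕜} (hA : A.PosDef) (hB : B.PosDef) :
    A⁻¹ - A⁻¹ * (B - A) * A⁻¹ ≤ B⁻¹ := by
  have hAdet : IsUnit A.det := A.isUnit_iff_isUnit_det.1 hA.isUnit
  have hBdet : IsUnit B.det := B.isUnit_iff_isUnit_det.1 hB.isUnit
  have hherm : (B⁻¹ - A⁻¹)ᴴ = B⁻¹ - A⁻¹ := hB.inv.isHermitian.sub hA.inv.isHermitian
  have hfactor : B⁻¹ - (A⁻¹ - A⁻¹ * (B - A) * A⁻¹) = (B⁻¹ - A⁻¹) * B * (B⁻¹ - A⁻¹)ᴴ := by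
    simp only [hherm, sub_mul, mul_sub, nonsing_inv_mul _ hBdet, nonsing_inv_mul _ hAdet,
      mul_nonsing_inv_cancel_right _ _ hBdet, one_mul]
    abel
  rw [Matrix.le_iff, hfactor]
  exact hB.posSemidef.mul_mul_conjTranspose_same _

theorem convexOn_inv_posDef : ConvexOn ℝ {A : Matrix ι ι 𝕜 | A.PosDef} (·⁻¹) := by
  refine ⟨convex_setOf_posDef, fun A hA B hB p q hp hq hpq => ?_⟩
  set C := p • A + q • B with hC
  have hCpos : C.PosDef := convex_setOf_posDef hA hB hp hq hpq
  have hbalance : p • (A - C) + q • (B - C) = 0 := by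
    rw [smul_sub, smul_sub, sub_add_sub_comm, ← add_smul, hpq, one_smul, hC, sub_self]
  calc C⁻¹
    _ = (p + q) • C⁻¹ - C⁻¹ * (p • (A - C) + q • (B - C)) * C⁻¹ := by simp [hbalance, hpq]
    _ = p • (C⁻¹ - C⁻¹ * (A - C) * C⁻¹) + q • (C⁻¹ - C⁻¹ * (B - C) * C⁻¹) := by
      simp only [mul_add, add_mul, Matrix.mul_smul, Matrix.smul_mul, add_smul, smul_sub _ C⁻¹]
      abel
    _ ≤ p • A⁻¹ + q • B⁻¹ := by
      gcongr
      · exact inv_sub_inv_mul_sub_mul_inv_le_inv hCpos hA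
      · exact inv_sub_inv_mul_sub_mul_inv_le_inv hCpos hB

theorem convexOn_trace_inv_posDef :
    ConvexOn ℝ {A : Matrix ι ι 𝕜 | A.PosDef} fun A => A⁻¹.trace := by
  refine ⟨convex_setOf_posDef, fun A hA B hB p q hp hq hpq => ?_⟩
  simpa using (tracePositiveLinearMap ι ℝ 𝕜).monotone'
    (convexOn_inv_posDef.2 hA hB hp hq hpq)

end InverseConvexity

section MMSE

variable {ι κ : Type*} [Fintype ι] [DecidableEq ι] [Fintype κ] [DecidableEq κ]

/-- The minimum mean square error of estimating a source of covariance `K`, component `t` of which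
is observed with power `a t` in noise of inverse variance `γ`. -/
noncomputable def mmse (K : Matrix ι ι ℝ) (γ : ℝ) (a : ι → ℝ) : ℝ :=
  (K⁻¹ + γ • diagonal a)⁻¹.trace

theorem convexOn_mmse {K : Matrix ι ι ℝ} (hK : K.PosDef) {γ : ℝ} (hγ : 0 ≤ γ) :
    ConvexOn ℝ (Set.Ici 0) (mmse K γ) := by
  let precision : (ι → ℝ) →ᵃ[ℝ] Matrix ι ι ℝ :=
    AffineMap.const ℝ _ K⁻¹ + (γ • diagonalLinearMap ι ℝ ℝ).toAffineMap
  have hposDef : Set.Ici 0 ⊆ precision ⁻¹' {A | A.PosDef} := fun a ha =>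
    hK.inv.add_posSemidef ((PosSemidef.diagonal ha).smul hγ)
  exact (convexOn_trace_inv_posDef.comp_affineMap precision).subset hposDef (convex_Ici 0)

theorem mmse_submatrix_comp_equiv (K : Matrix ι ι ℝ) (γ : ℝ) (a : ι → ℝ) (e : κ ≃ ι) :
    mmse (K.submatrix e e) γ (a ∘ e) = mmse K γ a := by
  have hprecision : (K.submatrix e e)⁻¹ + γ • diagonal (a ∘ e)
      = (K⁻¹ + γ • diagonal a).submatrix e e := by
    rw [inv_submatrix_equiv, ← submatrix_diagonal_equiv]
    rfl
  rw [mmse, hprecision, inv_submatrix_equiv]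
  exact Equiv.sum_comp e fun i => (K⁻¹ + γ • diagonal a)⁻¹ i i

theorem schurConvexOn_mmse {n : ℕ} {K : Matrix (Fin n) (Fin n) ℝ} (hK : K.PosDef)
    (hperm : ∀ σ : Equiv.Perm (Fin n), K.submatrix σ σ = K) {γ : ℝ} (hγ : 0 ≤ γ) :
    SchurConvexOn (Set.Ici 0) (mmse K γ) :=
  schurConvexOn_of_quasiconvexOn (convexOn_mmse hK hγ).quasiconvexOn
    (fun _ hx σ i => hx (σ i))
    fun x _ σ => by simpa only [hperm] using mmse_submatrix_comp_equiv K γ x σ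

end MMSE

section Equicorrelation

variable {ι κ : Type*} [DecidableEq ι] [DecidableEq κ]

/-- The correlation matrix `(1 - ρ) I + ρ J` of a source any two distinct components of which have
correlation coefficient `ρ`. -/
def equicorrelation (ι : Type*) [DecidableEq ι] (ρ : ℝ) : Matrix ι ι ℝ :=
  (1 - ρ) • (1 : Matrix ι ι ℝ) + ρ • of fun _ _ => 1

theorem equicorrelation_submatrix (ρ : ℝ) {e : κ → ι} (he : Function.Injective e) :
    (equicorrelation ι ρ).submatrix e e = equicorrelation κ ρ := by
  ext i j
  simp [equicorrelation, one_apply, he.eq_iff]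

theorem isHermitian_equicorrelation (ρ : ℝ) : (equicorrelation ι ρ).IsHermitian := by
  ext i j
  simp [equicorrelation, one_apply, eq_comm]

variable [Fintype ι]

theorem dotProduct_equicorrelation_mulVec (ρ : ℝ) (x : ι → ℝ) :
    x ⬝ᵥ equicorrelation ι ρ *ᵥ x = (1 - ρ) * ∑ i, x i ^ 2 + ρ * (∑ i, x i) ^ 2 := by
  have hones : (of fun _ _ => 1 : Matrix ι ι ℝ) *ᵥ x = fun _ => ∑ i, x i := by
    ext i
    simp [mulVec, dotProduct]
  rw [equicorrelation, add_mulVec, smul_mulVec, smul_mulVec, one_mulVec, hones, dotProduct_add,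
    dotProduct_smul, dotProduct_smul]
  simp [dotProduct, ← Finset.sum_mul, pow_two]

theorem posDef_equicorrelation {ρ : ℝ} (hρ1 : ρ < 1) (hρ2 : 0 < ρ * (Fintype.card ι - 1) + 1) :
    (equicorrelation ι ρ).PosDef := by
  refine PosDef.of_dotProduct_mulVec_pos (isHermitian_equicorrelation ρ) fun {x} hx => ?_
  rw [star_trivial, dotProduct_equicorrelation_mulVec]
  have hsq : 0 < ∑ i, x i ^ 2 := by
    obtain ⟨i, hi⟩ := Function.ne_iff.1 hx
    exact Finset.sum_pos' (fun j _ => sq_nonneg _) ⟨i, Finset.mem_univ i, sq_pos_of_ne_zero hi⟩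
  rcases le_or_gt 0 ρ with hρ | hρ
  · have := mul_pos (sub_pos.2 hρ1) hsq
    positivity
  · have hcauchy : (∑ i, x i) ^ 2 ≤ Fintype.card ι * ∑ i, x i ^ 2 :=
      sq_sum_le_card_mul_sum_sq
    calc 0
      _ < (ρ * (Fintype.card ι - 1) + 1) * ∑ i, x i ^ 2 := mul_pos hρ2 hsq
      _ = (1 - ρ) * ∑ i, x i ^ 2 + ρ * (Fintype.card ι * ∑ i, x i ^ 2) := by ring
      _ ≤ (1 - ρ) * ∑ i, x i ^ 2 + ρ * (∑ i, x i) ^ 2 := by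
        linarith [mul_le_mul_of_nonpos_left hcauchy hρ.le]

end Equicorrelation

/-- paper's Lemma 6: for the static-correlation covariance
`K(ρ) = (P_x/n)((1−ρ) I_n + ρ J_n)` with `ρ < 1` and `ρ(n−1)+1 > 0`, the MMSE
`err(a) = tr[(K(ρ)⁻¹ + γ diag(a))⁻¹]` is Schur-convex in the power allocation;
consequently, regardless of `ρ`, any feasible allocation majorized by every
feasible allocation minimizes `err` on the feasible set. -/
theorem stmt12 (n : ℕ) (hn : 0 < n) (Px ρ : ℝ) (hPx : 0 < Px)
    (hρ1 : ρ < 1) (hρ2 : 0 < ρ * (n - 1) + 1)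
    (K : Matrix (Fin n) (Fin n) ℝ)
    (hK : K = (Px / n) • ((1 - ρ) • (1 : Matrix (Fin n) (Fin n) ℝ)
        + ρ • Matrix.of (fun _ _ => (1 : ℝ))))
    (γ : ℝ) (hγ : 0 < γ) :
    (∀ a b : Fin n → ℝ, (∀ t, 0 ≤ a t) → (∀ t, 0 ≤ b t) → Majorizes a b →
      Matrix.trace ((K⁻¹ + γ • Matrix.diagonal a)⁻¹)
        ≤ Matrix.trace ((K⁻¹ + γ • Matrix.diagonal b)⁻¹))
    ∧ (∀ S : Set (Fin n → ℝ), (∀ a ∈ S, ∀ t, 0 ≤ a t) →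
        ∀ astar ∈ S, (∀ b ∈ S, Majorizes astar b) →
        ∀ b ∈ S,
          Matrix.trace ((K⁻¹ + γ • Matrix.diagonal astar)⁻¹)
            ≤ Matrix.trace ((K⁻¹ + γ • Matrix.diagonal b)⁻¹)) := by
  replace hK : K = (Px / n) • equicorrelation (Fin n) ρ := hK
  have hpos : K.PosDef := by
    rw [hK]
    exact (posDef_equicorrelation hρ1 (by simpa using hρ2)).smul (by positivity)
  have hperm (σ : Equiv.Perm (Fin n)) : K.submatrix σ σ = K := by
    rw [hK, submatrix_smul, Pi.smul_apply, Pi.smul_apply, equicorrelation_submatrix ρ σ.injective]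
  have hschur : SchurConvexOn (Set.Ici 0) (mmse K γ) := schurConvexOn_mmse hpos hperm hγ.le
  exact ⟨fun _ _ ha hb hab => hschur ha hb hab, fun _ hS _ ha hmaj => hschur.isMinOn hS ha hmaj⟩
end

section
/- Let n, s be positive integers with s ≤ n, U ∈ ℂ^{n×s} with U†U = I_s, P_x > 0, γ > 0, K = (P_x/s) U U†, and let d ∈ ℝ^n with d_t ≥ 0 (d_t = |h_t|² a_t). Then (P_x/s)·tr[(I_s + γ (P_x/s) U† diag(d_1,…,d_n) U)⁻¹] ≥ (P_x/s)·( Σ_{t=1}^n 1/(1 + γ d_t [K]_{tt}) + s − n ). -/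
open Matrix
open scoped ComplexOrder

/-!
Write `γ (P_x/s) U† diag(d) U` as `Aᴴ * A`, where `A` is `U` with its `t`-th row scaled by
`√(γ (P_x/s) d_t)`. By the Woodbury identity, replacing `1 + Aᴴ * A` by `1 + A * Aᴴ` changes the
trace of the inverse only by the difference of the dimensions, and the diagonal entries of
`1 + A * Aᴴ` are `1 + γ d_t [K]_tt`. It remains to see that a diagonal entry of the inverse of a
positive definite `R` dominates the reciprocal of the corresponding entry of `R`. The block matrix
`[R, 1; 1, R⁻¹]` is positive semidefinite, its Schur complement being zero, so its principal minor
`R i i * R⁻¹ i i - 1` is nonnegative.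
-/

section CommRing

variable {m n R : Type*} [Fintype m] [Fintype n] [DecidableEq m] [DecidableEq n] [CommRing R]

theorem inv_one_add_mul_eq_sub (A : Matrix m n R) (B : Matrix n m R) (h : IsUnit (1 + B * A)) :
    (1 + A * B)⁻¹ = 1 - A * (1 + B * A)⁻¹ * B := by
  simpa using add_mul_mul_inv_eq_sub (1 : Matrix m m R) A (1 : Matrix n n R) B
    isUnit_one isUnit_one (by simpa using h)

theorem mul_inv_one_add (M : Matrix n n R) (h : IsUnit (1 + M)) :
    M * (1 + M)⁻¹ = 1 - (1 + M)⁻¹ := by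
  have hcancel : (1 + M) * (1 + M)⁻¹ = 1 :=
    mul_nonsing_inv _ ((isUnit_iff_isUnit_det _).mp h)
  rw [Matrix.add_mul, Matrix.one_mul] at hcancel
  exact eq_sub_of_add_eq' hcancel

theorem trace_inv_one_add_mul_comm (A : Matrix m n R) (B : Matrix n m R)
    (h : IsUnit (1 + B * A)) :
    trace (1 + A * B : Matrix m m R)⁻¹ =
      trace (1 + B * A : Matrix n n R)⁻¹ + Fintype.card m - Fintype.card n := by
  calc trace (1 + A * B : Matrix m m R)⁻¹
      = Fintype.card m - trace (A * (1 + B * A : Matrix n n R)⁻¹ * B) := by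
        rw [inv_one_add_mul_eq_sub A B h, trace_sub, trace_one]
    _ = Fintype.card m - trace (B * A * (1 + B * A : Matrix n n R)⁻¹) := by
        rw [trace_mul_comm, Matrix.mul_assoc B A]
    _ = Fintype.card m - (Fintype.card n - trace (1 + B * A : Matrix n n R)⁻¹) := by
        rw [mul_inv_one_add _ h, trace_sub, trace_one]
    _ = trace (1 + B * A : Matrix n n R)⁻¹ + Fintype.card m - Fintype.card n := by ring

end CommRing

section RCLike

variable {m n 𝕜 : Type*} [RCLike 𝕜]

theorem posSemidef_fromBlocks_one_one_inv [Fintype n] [DecidableEq n] {R : Matrix n n 𝕜}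
    (hR : R.PosDef) : (fromBlocks R 1 1 R⁻¹).PosSemidef := by
  have := hR.isUnit.invertible
  simpa using (hR.fromBlocks₁₁ (1 : Matrix n n 𝕜) R⁻¹).mpr (by simpa using PosSemidef.zero)

theorem inv_diag_le_diag_inv [Fintype n] [DecidableEq n] {R : Matrix n n 𝕜} (hR : R.PosDef)
    (i : n) : (R i i)⁻¹ ≤ R⁻¹ i i := by
  have hminor : 0 ≤ ((fromBlocks R 1 1 R⁻¹).submatrix
      ![Sum.inl i, Sum.inr i] ![Sum.inl i, Sum.inr i]).det :=
    ((posSemidef_fromBlocks_one_one_inv hR).submatrix _).det_nonneg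
  have hmul : 1 ≤ R i i * R⁻¹ i i := by
    rw [det_fin_two] at hminor
    simpa using hminor
  exact (inv_le_iff_one_le_mul₀' hR.diag_pos).mpr hmul

theorem sum_inv_diag_le_trace_inv [Fintype n] [DecidableEq n] {R : Matrix n n 𝕜} (hR : R.PosDef) :
    ∑ i, (R i i)⁻¹ ≤ trace R⁻¹ :=
  Finset.sum_le_sum fun i _ => inv_diag_le_diag_inv hR i

theorem mul_conjTranspose_self_diag [Fintype m] (A : Matrix n m 𝕜) (t : n) :
    (A * Aᴴ) t t = ((∑ k, ‖A t k‖ ^ 2 : ℝ) : 𝕜) := by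
  simp [mul_apply, RCLike.mul_conj]

theorem sum_inv_add_card_sub_card_le_trace_inv_one_add_gram [Fintype m] [DecidableEq m] [Fintype n]
    (A : Matrix n m 𝕜) :
    ((∑ t, (1 + ∑ k, ‖A t k‖ ^ 2)⁻¹ + Fintype.card m - Fintype.card n : ℝ) : 𝕜) ≤
      trace (1 + Aᴴ * A)⁻¹ := by
  classical
  have hR : (1 + A * Aᴴ).PosDef := PosDef.one.add_posSemidef (posSemidef_self_mul_conjTranspose A)
  rw [trace_inv_one_add_mul_comm Aᴴ A hR.isUnit]
  push_cast
  gcongr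
  simpa [mul_conjTranspose_self_diag] using sum_inv_diag_le_trace_inv hR

theorem conjTranspose_mul_self_diagonal_sqrt_mul [Fintype n] [DecidableEq n] {w : n → ℝ}
    (hw : ∀ t, 0 ≤ w t) (U : Matrix n m 𝕜) :
    (diagonal (fun t => (√(w t) : 𝕜)) * U)ᴴ * (diagonal (fun t => (√(w t) : 𝕜)) * U) =
      Uᴴ * diagonal (fun t => (w t : 𝕜)) * U := by
  have hsq : (diagonal fun t => (√(w t) : 𝕜))ᴴ * diagonal (fun t => (√(w t) : 𝕜)) =
      diagonal fun t => (w t : 𝕜) := by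
    rw [diagonal_conjTranspose, diagonal_mul_diagonal]
    congr! with t
    simp [← RCLike.ofReal_mul, Real.mul_self_sqrt (hw t)]
  rw [conjTranspose_mul, ← hsq]
  simp only [Matrix.mul_assoc]

theorem sum_inv_add_card_sub_card_le_trace_inv_one_add_weighted_gram [Fintype m] [DecidableEq m]
    [Fintype n] [DecidableEq n] {w : n → ℝ} (hw : ∀ t, 0 ≤ w t) (U : Matrix n m 𝕜) :
    ((∑ t, (1 + w t * ∑ k, ‖U t k‖ ^ 2)⁻¹ + Fintype.card m - Fintype.card n : ℝ) : 𝕜) ≤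
      trace (1 + Uᴴ * diagonal (fun t => (w t : 𝕜)) * U)⁻¹ := by
  have hnorm (t : n) : ∑ k, ‖(diagonal (fun t => (√(w t) : 𝕜)) * U) t k‖ ^ 2 =
      w t * ∑ k, ‖U t k‖ ^ 2 := by
    simp [diagonal_mul, mul_pow, Real.sq_sqrt (hw t), Finset.mul_sum]
  simpa only [hnorm, conjTranspose_mul_self_diagonal_sqrt_mul hw U] using
    sum_inv_add_card_sub_card_le_trace_inv_one_add_gram (diagonal (fun t => (√(w t) : 𝕜)) * U)

theorem stmt17_general [Fintype m] [DecidableEq m] [Fintype n] [DecidableEq n]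
    (U : Matrix n m 𝕜) {c γ : ℝ} (hc : 0 ≤ c) (hγ : 0 ≤ γ) {d : n → ℝ} (hd : ∀ t, 0 ≤ d t)
    {Ktt : n → ℝ} (hKtt : ∀ t, Ktt t = c * ∑ k, ‖U t k‖ ^ 2) :
    ((c * ((∑ t, 1 / (1 + γ * d t * Ktt t)) + Fintype.card m - Fintype.card n) : ℝ) : 𝕜) ≤
      (c : 𝕜) * trace
        (1 + ((γ * c : ℝ) : 𝕜) • (Uᴴ * diagonal (fun t => (d t : 𝕜)) * U))⁻¹ := by
  have hw (t : n) : 0 ≤ γ * c * d t := mul_nonneg (mul_nonneg hγ hc) (hd t)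
  have hdiag (t : n) : 1 / (1 + γ * d t * Ktt t) =
      (1 + γ * c * d t * ∑ k, ‖U t k‖ ^ 2)⁻¹ := by
    rw [hKtt]
    ring
  have hsmul : ((γ * c : ℝ) : 𝕜) • (Uᴴ * diagonal (fun t => (d t : 𝕜)) * U) =
      Uᴴ * diagonal (fun t => ((γ * c * d t : ℝ) : 𝕜)) * U := by
    rw [← Matrix.smul_mul, ← Matrix.mul_smul, ← diagonal_smul]
    congr! with t
    simp
  rw [RCLike.ofReal_mul, hsmul]
  simp only [hdiag]
  exact mul_le_mul_of_nonneg_left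
    (sum_inv_add_card_sub_card_le_trace_inv_one_add_weighted_gram hw U)
    (RCLike.ofReal_nonneg.mpr hc)

end RCLike

/-- paper's Lemma 9: for the flat-spectrum low-rank source
`K = (P_x/s) U U†` with `U†U = I_s`, effective gains `d_t = |h_t|² a_t ≥ 0`
and inverse noise variance `γ`, the MMSE
`(P_x/s) tr[(I_s + γ (P_x/s) U† diag(d) U)⁻¹]` is lower bounded by
`(P_x/s)(Σ_t 1/(1 + γ d_t [K]_{tt}) + s − n)`. -/
theorem stmt17 (n s : ℕ) (hn : 0 < n) (hs : 0 < s) (hsn : s ≤ n)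
    (U : Matrix (Fin n) (Fin s) ℂ) (hU : Uᴴ * U = 1)
    (Px γ : ℝ) (hPx : 0 < Px) (hγ : 0 < γ)
    (d : Fin n → ℝ) (hd : ∀ t, 0 ≤ d t)
    (Ktt : Fin n → ℝ) (hKtt : ∀ t, Ktt t = (Px / s) * ∑ k, ‖U t k‖ ^ 2) :
    (((Px / s) * ((∑ t, 1 / (1 + γ * d t * Ktt t)) + s - n) : ℝ) : ℂ)
      ≤ ((Px / s : ℝ) : ℂ) *
        Matrix.trace
          (((1 : Matrix (Fin s) (Fin s) ℂ)
              + ((γ * (Px / s) : ℝ) : ℂ) •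
                (Uᴴ * Matrix.diagonal (fun t => (d t : ℂ)) * U))⁻¹) := by
  simpa only [Fintype.card_fin] using!
    stmt17_general U (div_nonneg hPx.le s.cast_nonneg) hγ.le hd hKtt
end

section
/- Let K ∈ ℂ^{n×n} be Hermitian positive definite and let d ∈ ℝ^n with d_t ≥ 0. Then tr[(K⁻¹ + diag(d_1,…,d_n))⁻¹] ≤ Σ_{t=1}^n [K]_{tt} / (1 + d_t [K]_{tt}), where [K]_{tt} are the (real, positive) diagonal entries of K. That is, the MMSE of the optimal estimator is upper bounded by the error of the scheme that ignores the correlation between the signal components. -/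
open Matrix
open scoped ComplexOrder

/-!
For a positive definite matrix `A`, both `A - c e eᴴ ≥ 0` and `c⁻¹ - eᴴ A⁻¹ e ≥ 0` say that the
bordered matrix `[A e; eᴴ c⁻¹]` is positive semidefinite, by taking one Schur complement or the
other. With `e` the `i`-th basis vector, `1 / [A⁻¹]ᵢᵢ` is thus the largest `c` for which
`c eᵢ eᵢᴴ ≤ A`, and in this form it is visibly superadditive in `A`. Since `K⁻¹` dominates
`[K]ᵢᵢ⁻¹ eᵢ eᵢᴴ` and `diag(d)` dominates `dᵢ eᵢ eᵢᴴ`, the `i`-th diagonal entry of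
`(K⁻¹ + diag(d))⁻¹` is at most `([K]ᵢᵢ⁻¹ + dᵢ)⁻¹`, so the bound already holds entry by entry.
-/

section RankOneLowerBound

variable {𝕜 m ι : Type*} [Field 𝕜] [PartialOrder 𝕜] [StarRing 𝕜] [StarOrderedRing 𝕜]

theorem posSemidef_sub_mul_inv_mul_iff [Fintype m] [DecidableEq m] [Fintype ι] [DecidableEq ι]
    {A : Matrix m m 𝕜} {C : Matrix ι ι 𝕜} (hA : A.PosDef) (hC : C.PosDef) (B : Matrix m ι 𝕜) :
    (A - B * C⁻¹ * Bᴴ).PosSemidef ↔ (C - Bᴴ * A⁻¹ * B).PosSemidef := by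
  have := hA.isUnit.invertible
  have := hC.isUnit.invertible
  rw [← hC.fromBlocks₂₂ A B, hA.fromBlocks₁₁ B C]

theorem posSemidef_single [DecidableEq ι] {c : 𝕜} (hc : 0 ≤ c) (i : ι) :
    (single i i c).PosSemidef := by
  rw [← diagonal_single]
  exact .diagonal (Pi.single_nonneg.mpr hc)

theorem posSemidef_diagonal_sub_single [DecidableEq ι] {d : ι → 𝕜} (hd : ∀ i, 0 ≤ d i) (i : ι) :
    (diagonal d - single i i (d i)).PosSemidef := by
  rw [← diagonal_single, diagonal_sub, posSemidef_diagonal_iff]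
  intro j
  rcases eq_or_ne j i with rfl | hji
  · simp
  · simpa [hji] using hd j

variable [PosMulReflectLT 𝕜] [Fintype ι] [DecidableEq ι]

theorem posSemidef_sub_smul_vecMulVec_iff {A : Matrix ι ι 𝕜} (hA : A.PosDef) {c : 𝕜} (hc : 0 < c)
    (v : ι → 𝕜) :
    (A - c • vecMulVec v (star v)).PosSemidef ↔ star v ⬝ᵥ A⁻¹ *ᵥ v ≤ c⁻¹ := by
  have hC : (diagonal fun _ : Unit => c⁻¹).PosDef := .diagonal fun _ => inv_pos.mpr hc
  have hC_inv : (diagonal fun _ : Unit => c⁻¹)⁻¹ = diagonal fun _ => c :=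
    inv_eq_right_inv (by simp [hc.ne'])
  have hvv : replicateCol Unit v * diagonal (fun _ : Unit => c) * (replicateCol Unit v)ᴴ =
      c • vecMulVec v (star v) := by
    rw [← smul_one_eq_diagonal, Matrix.mul_smul, Matrix.mul_one, Matrix.smul_mul,
      conjTranspose_replicateCol, ← vecMulVec_eq]
  have hvAv : (replicateCol Unit v)ᴴ * A⁻¹ * replicateCol Unit v =
      diagonal fun _ => star v ⬝ᵥ A⁻¹ *ᵥ v := by
    rw [Matrix.mul_assoc, ← replicateCol_mulVec]
    ext
    simp [mul_apply, dotProduct]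
  have h := posSemidef_sub_mul_inv_mul_iff hA hC (replicateCol Unit v)
  rw [hC_inv, hvv, hvAv, diagonal_sub, posSemidef_diagonal_iff] at h
  simpa only [sub_nonneg, forall_const] using h

theorem posSemidef_sub_single_iff {A : Matrix ι ι 𝕜} (hA : A.PosDef) {c : 𝕜} (hc : 0 < c)
    (i : ι) : (A - single i i c).PosSemidef ↔ A⁻¹ i i ≤ c⁻¹ := by
  simpa [← Pi.single_star, ← single_eq_single_vecMulVec_single] using
    posSemidef_sub_smul_vecMulVec_iff hA hc (Pi.single i 1)

theorem posSemidef_inv_sub_single {K : Matrix ι ι 𝕜} (hK : K.PosDef) (i : ι) :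
    (K⁻¹ - single i i (K i i)⁻¹).PosSemidef := by
  rw [posSemidef_sub_single_iff hK.inv (inv_pos.mpr hK.diag_pos), inv_inv,
    nonsing_inv_nonsing_inv K ((isUnit_iff_isUnit_det K).mp hK.isUnit)]

theorem inv_inv_add_apply_le {K D : Matrix ι ι 𝕜} (hK : K.PosDef) {c : 𝕜} (hc : 0 ≤ c) {i : ι}
    (hD : (D - single i i c).PosSemidef) : (K⁻¹ + D)⁻¹ i i ≤ K i i / (1 + c * K i i) := by
  have hKi : 0 < K i i := hK.diag_pos
  have hD_nonneg : D.PosSemidef := by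
    simpa only [sub_add_cancel] using hD.add (posSemidef_single hc i)
  have hsum : (K⁻¹ + D - single i i ((K i i)⁻¹ + c)).PosSemidef := by
    rw [single_add, add_sub_add_comm]
    exact (posSemidef_inv_sub_single hK i).add hD
  calc (K⁻¹ + D)⁻¹ i i ≤ ((K i i)⁻¹ + c)⁻¹ :=
        (posSemidef_sub_single_iff (hK.inv.add_posSemidef hD_nonneg)
          (add_pos_of_pos_of_nonneg (inv_pos.mpr hKi) hc) i).mp hsum
    _ = K i i / (1 + c * K i i) := by
        have hKi_ne : K i i ≠ 0 := hKi.ne'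
        field_simp

/-- When `D` is positive definite, `hD` says `d t ≤ 1 / [D⁻¹]ₜₜ`: this is the case of observation
noise with covariance `D⁻¹`, possibly correlated across the components. -/
theorem stmt19_general {K D : Matrix ι ι 𝕜} (hK : K.PosDef) {d : ι → 𝕜} (hd : ∀ t, 0 ≤ d t)
    (hD : ∀ t, (D - single t t (d t)).PosSemidef) :
    trace ((K⁻¹ + D)⁻¹) ≤ ∑ t, K t t / (1 + d t * K t t) :=
  Finset.sum_le_sum fun t _ => inv_inv_add_apply_le hK (hd t) (hD t)

end RankOneLowerBound

/-- for a Hermitian positive definite covariance `K` and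
nonnegative effective gains `d`, the MMSE `tr[(K⁻¹ + diag(d))⁻¹]` is upper
bounded by `Σ_t [K]_{tt}/(1 + d_t [K]_{tt})`, the error of the scheme that
ignores the correlation between the signal components. -/
theorem stmt19 (n : ℕ) (hn : 0 < n)
    (K : Matrix (Fin n) (Fin n) ℂ) (hK : K.PosDef)
    (d : Fin n → ℝ) (hd : ∀ t, 0 ≤ d t) :
    Matrix.trace ((K⁻¹ + Matrix.diagonal (fun t => (d t : ℂ)))⁻¹)
      ≤ ((∑ t, (K t t).re / (1 + d t * (K t t).re) : ℝ) : ℂ) := by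
  have hKre t : ((K t t).re : ℂ) = K t t := hK.isHermitian.coe_re_apply_self t
  have hd' t : (0 : ℂ) ≤ d t := Complex.zero_le_real.mpr (hd t)
  simpa [hKre] using stmt19_general hK hd' (posSemidef_diagonal_sub_single hd')
end
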